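/- arXiv:2503.02663 — 4 statements merged into one kernel-verified Lean document; each statement's English description precedes it below -/
import Mathlib

section
/- For every planar binary tree t, the flip-equivalence class of t is a finite set whose cardinality equals 2^(ℓ t), where ℓ t is the number of internal positions of t whose two children subtrees are not flip-equivalent; in particular every flip-equivalence class of planar binary trees has cardinality a power of two. -/
/-- Planar binary trees. -/
inductive T : Type where
  | nil : T
  | node : T → T → T

/-- The number of nodes of a planar binary tree. -/
def T.nodes : T → ℕ
  | .nil => 0
  | .node a b => a.nodes + b.nodes + 1

/-- Flip equivalence: the least relation such that `nil ≈ nil` and, whenever `a ≈ c` and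
`b ≈ d`, both `node a b ≈ node c d` and `node a b ≈ node d c`. -/
inductive Flip : T → T → Prop where
  | nil : Flip .nil .nil
  | node {a b c d : T} : Flip a c → Flip b d → Flip (.node a b) (.node c d)
  | swap {a b c d : T} : Flip a c → Flip b d → Flip (.node a b) (.node d c)

open Classical in
/-- The number of internal positions of a tree whose two children subtrees are not
flip-equivalent. -/
noncomputable def ell : T → ℕ
  | .nil => 0
  | .node a b => ell a + ell b + (if Flip a b then 0 else 1)

/-!
A tree flip-equivalent to `node a b` is obtained by choosing a member of the class of `a` and a
member of the class of `b`, and placing them in one of the two orders. If `a` and `b` are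
flip-equivalent, the two orders give the same set of trees; otherwise they give disjoint sets of
equal size. Hence the size of the class is the product of the sizes for `a` and `b`, doubled exactly
at a node whose children are not flip-equivalent.
-/

section Image2

variable {α β γ : Type*} {f : α → β → γ}

theorem ncard_image2_of_injective2 (hf : Function.Injective2 f) (s : Set α) (t : Set β) :
    (Set.image2 f s t).ncard = s.ncard * t.ncard := by
  rw [← Set.image_uncurry_prod, Set.ncard_image_of_injective _ hf.uncurry, Set.ncard_prod]

theorem disjoint_image2_of_disjoint_left (hf : Function.Injective2 f) {s s' : Set α}
    (h : Disjoint s s') (t t' : Set β) : Disjoint (Set.image2 f s t) (Set.image2 f s' t') := by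
  rw [Set.disjoint_left]
  rintro _ ⟨a, ha, b, -, rfl⟩ ⟨a', ha', b', -, heq⟩
  exact Set.disjoint_left.mp h ha ((hf heq).1 ▸ ha')

end Image2

namespace Flip

@[symm]
protected theorem symm {s t : T} (h : Flip s t) : Flip t s := by
  induction h with
  | nil => exact .nil
  | node _ _ hca hdb => exact .node hca hdb
  | swap _ _ hca hdb => exact .swap hdb hca

@[trans]
protected theorem trans {s t u : T} (hst : Flip s t) (htu : Flip t u) : Flip s u := by
  induction hst generalizing u with
  | nil => exact htu
  | node _ _ iha ihb =>
    cases htu with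
    | node hc hd => exact .node (iha hc) (ihb hd)
    | swap hc hd => exact .swap (iha hc) (ihb hd)
  | swap _ _ iha ihb =>
    cases htu with
    | node hd hc => exact .swap (iha hc) (ihb hd)
    | swap hd hc => exact .node (iha hc) (ihb hd)

end Flip

theorem ell_node_of_flip {a b : T} (h : Flip a b) : ell (.node a b) = ell a + ell b := by
  rw [ell, if_pos h, add_zero]

theorem ell_node_of_not_flip {a b : T} (h : ¬ Flip a b) :
    ell (.node a b) = ell a + ell b + 1 := by
  rw [ell, if_neg h]

namespace T

theorem node_injective2 : Function.Injective2 node :=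
  fun _ _ _ _ => node.inj

/-- The flip-equivalence class of a planar binary tree. -/
def flipClass (t : T) : Set T :=
  {s | Flip s t}

theorem flipClass_eq_of_flip {a b : T} (h : Flip a b) : a.flipClass = b.flipClass :=
  Set.ext fun _ => ⟨fun hs => hs.trans h, fun hs => hs.trans h.symm⟩

theorem disjoint_flipClass_of_not_flip {a b : T} (h : ¬ Flip a b) :
    Disjoint a.flipClass b.flipClass :=
  Set.disjoint_left.mpr fun _ hsa hsb => h (hsa.symm.trans hsb)

theorem flipClass_nil : nil.flipClass = {nil} := by
  ext s
  constructor
  · rintro ⟨⟩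
    rfl
  · rintro rfl
    exact .nil

theorem flipClass_node (a b : T) :
    (node a b).flipClass =
      Set.image2 node a.flipClass b.flipClass ∪ Set.image2 node b.flipClass a.flipClass := by
  ext s
  constructor
  · rintro (_ | ⟨ha, hb⟩ | ⟨ha, hb⟩)
    · exact .inl (Set.mem_image2_of_mem ha hb)
    · exact .inr (Set.mem_image2_of_mem ha hb)
  · rintro (⟨x, hx, y, hy, rfl⟩ | ⟨x, hx, y, hy, rfl⟩)
    · exact .node hx hy
    · exact .swap hx hy

theorem finite_flipClass (t : T) : t.flipClass.Finite := by
  induction t with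
  | nil => simp [flipClass_nil]
  | node a b iha ihb =>
    rw [flipClass_node]
    exact (iha.image2 node ihb).union (ihb.image2 node iha)

theorem ncard_flipClass_node_of_flip {a b : T} (h : Flip a b) :
    (node a b).flipClass.ncard = a.flipClass.ncard * b.flipClass.ncard := by
  rw [flipClass_node, flipClass_eq_of_flip h, Set.union_self,
    ncard_image2_of_injective2 node_injective2]

theorem ncard_flipClass_node_of_not_flip {a b : T} (h : ¬ Flip a b) :
    (node a b).flipClass.ncard = 2 * (a.flipClass.ncard * b.flipClass.ncard) := by
  have hdisj : Disjoint (Set.image2 node a.flipClass b.flipClass)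
      (Set.image2 node b.flipClass a.flipClass) :=
    disjoint_image2_of_disjoint_left node_injective2 (disjoint_flipClass_of_not_flip h) _ _
  rw [flipClass_node, Set.ncard_union_eq hdisj
      ((finite_flipClass a).image2 node (finite_flipClass b))
      ((finite_flipClass b).image2 node (finite_flipClass a)),
    ncard_image2_of_injective2 node_injective2, ncard_image2_of_injective2 node_injective2,
    mul_comm b.flipClass.ncard, two_mul]

theorem ncard_flipClass (t : T) : t.flipClass.ncard = 2 ^ ell t := by
  induction t with
  | nil => simp [flipClass_nil, ell]
  | node a b iha ihb =>
    by_cases h : Flip a b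
    · rw [ncard_flipClass_node_of_flip h, ell_node_of_flip h, iha, ihb, pow_add]
    · rw [ncard_flipClass_node_of_not_flip h, ell_node_of_not_flip h, iha, ihb, pow_succ',
        pow_add]

end T

/-- The flip-equivalence class of any planar binary tree `t` is a finite set of cardinality
`2 ^ ell t`; in particular every flip-equivalence class has cardinality a power of two. -/
theorem flip_class_card_pow_two (t : T) :
    {s : T | Flip s t}.Finite ∧ {s : T | Flip s t}.ncard = 2 ^ ell t :=
  ⟨t.finite_flipClass, t.ncard_flipClass⟩
end

section
/- For every natural number n, Σ_{k=0}^{n} 2^k · K(n,k) equals the n-th Catalan number. -/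
open Classical in
/-- The array `K n ℓ`: base cases (taking precedence) `K n 0 = 1` if `n = 2^r - 1` and `0`
otherwise; `K s t = 0` for `t ≥ s > 0`; `K s (s-1) = 1` for `s > 1`; otherwise
`K (2n) ℓ = (1/2) · ∑_{k=0}^{2n-1} ∑_{v=0}^{ℓ-1} K k v · K (2n-1-k) (ℓ-1-v)`,
`K (2n+1) (2ℓ) = K n ℓ + (1/2) · ∑_{k=0}^{2n} ∑_{v=0}^{2ℓ-1} K k v · K (2n-k) (2ℓ-1-v)` and
`K (2n+1) (2ℓ+1) = (1/2) · (-K n ℓ + ∑_{k=0}^{2n} ∑_{v=0}^{2ℓ} K k v · K (2n-k) (2ℓ-v))`. -/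
noncomputable def K : ℕ → ℕ → ℚ
  | n, l =>
    if l = 0 then (if ∃ r : ℕ, n = 2 ^ r - 1 then 1 else 0)
    else if 0 < n ∧ n ≤ l then 0
    else if 1 < n ∧ l = n - 1 then 1
    else if h : n % 2 = 0 then
      (1 / 2) * ∑ k ∈ (Finset.range n).attach, ∑ v ∈ Finset.range l,
        K k.1 v * K (n - 1 - k.1) (l - 1 - v)
    else if l % 2 = 0 then
      K (n / 2) (l / 2) + (1 / 2) * ∑ k ∈ (Finset.range n).attach, ∑ v ∈ Finset.range l,
        K k.1 v * K (n - 1 - k.1) (l - 1 - v)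
    else
      (1 / 2) * (- K (n / 2) (l / 2) + ∑ k ∈ (Finset.range n).attach, ∑ v ∈ Finset.range l,
        K k.1 v * K (n - 1 - k.1) (l - 1 - v))
termination_by n l => n
decreasing_by
  · have := Finset.mem_range.mp k.2; omega
  · have := Finset.mem_range.mp k.2; omega
  · omega
  · have := Finset.mem_range.mp k.2; omega
  · have := Finset.mem_range.mp k.2; omega
  · omega
  · have := Finset.mem_range.mp k.2; omega
  · have := Finset.mem_range.mp k.2; omega

/-!
The row polynomials `P n = ∑ l, K n l X ^ l` satisfy
`P (n + 1) = D (n + 1) + X / 2 * ∑ i + j = n, P i * P j`, where `D n` vanishes for even `n` and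
`D (2 * m + 1) = (1 - X / 2) * P m (X ^ 2)`. The boundary values `K s t = 0` (`t ≥ s > 0`) and
`K s (s - 1) = 1` agree with this recurrence: for `n ≥ 1` the right-hand side has degree at most
`n`, its `X ^ n` coefficient being `1 / 2 + 1 / 2`, from the two terms `i = 0` and `j = 0`.
At `X = 2` the term `D` disappears and what is left is Segner's recurrence for the Catalan numbers.
-/

section RowPolynomials

open Finset Polynomial

theorem eq_catalan_of_convolution {R : Type*} [NonAssocSemiring R] {a : ℕ → R} (h_zero : a 0 = 1)
    (h_succ : ∀ n, a (n + 1) = ∑ p ∈ antidiagonal n, a p.1 * a p.2) (n : ℕ) :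
    a n = (catalan n : R) := by
  induction n using Nat.strong_induction_on with
  | _ n ih =>
    cases n with
    | zero => simp [h_zero]
    | succ n =>
      rw [h_succ, catalan_succ', Nat.cast_sum]
      refine sum_congr rfl fun p hp => ?_
      rw [ih p.1 (Nat.antidiagonal.fst_lt hp),
        ih p.2 (Nat.antidiagonal.snd_lt hp), Nat.cast_mul]

theorem coeff_one_sub_C_mul_X_mul_expand_two {R : Type*} [CommRing R] (a : R) (p : R[X]) (l : ℕ) :
    ((1 - C a * X) * expand R 2 p).coeff l =
      if Even l then p.coeff (l / 2) else -a * p.coeff (l / 2) := by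
  have split : (1 - C a * X) * expand R 2 p = expand R 2 p - C a * (X * expand R 2 p) := by ring
  rw [split, coeff_sub, coeff_C_mul]
  obtain ⟨m, rfl | rfl⟩ := l.even_or_odd'
  · have shifted : (X * expand R 2 p).coeff (2 * m) = 0 := by
      cases m with
      | zero => simp
      | succ m =>
        rw [show 2 * (m + 1) = 2 * m + 1 + 1 by ring, coeff_X_mul, coeff_expand two_pos,
          if_neg (by omega)]
    simp [shifted, coeff_expand]
  · have odd_div : (2 * m + 1) / 2 = m := by omega
    simp [odd_div, coeff_expand, coeff_X_mul]

theorem exists_two_mul_add_one_eq_two_pow_sub_one {m : ℕ} :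
    (∃ r : ℕ, 2 * m + 1 = 2 ^ r - 1) ↔ ∃ r : ℕ, m = 2 ^ r - 1 := by
  constructor
  · rintro ⟨_ | r, hr⟩
    · simp at hr
    · exact ⟨r, by rw [pow_succ] at hr; omega⟩
  · rintro ⟨r, hr⟩
    have : 0 < 2 ^ r := by positivity
    exact ⟨r + 1, by rw [pow_succ]; omega⟩

open Classical in
theorem K_zero_right (n : ℕ) : K n 0 = if ∃ r : ℕ, n = 2 ^ r - 1 then 1 else 0 := by
  rw [K, if_pos rfl]

theorem K_zero_zero : K 0 0 = 1 := by
  rw [K_zero_right, if_pos ⟨0, by norm_num⟩]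

theorem K_zero_right_of_even {n : ℕ} (hn : Even n) (pos : 0 < n) : K n 0 = 0 := by
  rw [K_zero_right, if_neg]
  rintro ⟨_ | r, rfl⟩
  · simp at pos
  · have : 0 < 2 ^ r := by positivity
    rw [Nat.even_iff, pow_succ] at hn
    omega

open Classical in
theorem K_two_mul_add_one_zero (m : ℕ) : K (2 * m + 1) 0 = K m 0 := by
  rw [K_zero_right, K_zero_right]
  exact if_congr exists_two_mul_add_one_eq_two_pow_sub_one rfl rfl

theorem K_eq_zero_of_le {n l : ℕ} (hl : 0 < l) (h : n ≤ l) : K n l = 0 := by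
  obtain rfl | hn := n.eq_zero_or_pos
  · rw [K]
    simp [hl.ne']
  · rw [K, if_neg hl.ne', if_pos ⟨hn, h⟩]

theorem K_succ_self (n : ℕ) : K (n + 1) n = 1 := by
  cases n with
  | zero => rw [K_zero_right, if_pos ⟨1, by norm_num⟩]
  | succ n => rw [K, if_neg (by omega), if_neg (by omega), if_pos (by omega)]

/-- The generating polynomial `∑ l, K n l X ^ l` of the `n`-th row of `K`. -/
noncomputable def rowPoly (n : ℕ) : ℚ[X] :=
  ∑ l ∈ range (n + 1), monomial l (K n l)

theorem coeff_rowPoly (n l : ℕ) : (rowPoly n).coeff l = K n l := by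
  simp only [rowPoly, finsetSum_coeff, coeff_monomial, sum_ite_eq', mem_range]
  split_ifs with h
  · rfl
  · rw [K_eq_zero_of_le] <;> omega

theorem eval_rowPoly (x : ℚ) (n : ℕ) :
    (rowPoly n).eval x = ∑ l ∈ range (n + 1), x ^ l * K n l := by
  simp [rowPoly, eval_finsetSum, mul_comm]

theorem natDegree_rowPoly_le (n : ℕ) : (rowPoly n).natDegree ≤ n - 1 :=
  natDegree_le_iff_coeff_eq_zero.mpr fun l hl => by
    rw [coeff_rowPoly, K_eq_zero_of_le] <;> omega

theorem rowPoly_zero : rowPoly 0 = 1 := by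
  simp [rowPoly, K_zero_zero]

theorem rowPoly_one : rowPoly 1 = 1 := by
  rw [eq_C_of_natDegree_le_zero (natDegree_rowPoly_le 1), coeff_rowPoly, K_succ_self, C_1]

/-- The `n`-th convolution `∑ i + j = n, rowPoly i * rowPoly j` of the row polynomials. -/
noncomputable def rowConv (n : ℕ) : ℚ[X] :=
  ∑ p ∈ antidiagonal n, rowPoly p.1 * rowPoly p.2

theorem coeff_rowConv (n l : ℕ) :
    (rowConv n).coeff l =
      ∑ k ∈ range (n + 1), ∑ v ∈ range (l + 1), K k v * K (n - k) (l - v) := by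
  simp only [rowConv, finsetSum_coeff, coeff_mul, coeff_rowPoly]
  rw [Nat.sum_antidiagonal_eq_sum_range_succ
    fun i j => ∑ q ∈ antidiagonal l, K i q.1 * K j q.2]
  exact sum_congr rfl fun k _ =>
    Nat.sum_antidiagonal_eq_sum_range_succ (fun v w => K k v * K (n - k) w) l

theorem natDegree_rowPoly_mul_le (i j : ℕ) :
    (rowPoly i * rowPoly j).natDegree ≤ (i - 1) + (j - 1) :=
  natDegree_mul_le_of_le (natDegree_rowPoly_le i) (natDegree_rowPoly_le j)

theorem natDegree_rowConv_le (n : ℕ) : (rowConv n).natDegree ≤ n - 1 :=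
  natDegree_sum_le_of_forall_le _ _ fun p hp => by
    have sum_eq := mem_antidiagonal.mp hp
    have := natDegree_rowPoly_mul_le p.1 p.2
    omega

theorem coeff_rowConv_succ_self (n : ℕ) : (rowConv (n + 1)).coeff n = 2 := by
  cases n with
  | zero => norm_num [rowConv, Nat.sum_antidiagonal_succ, rowPoly_zero, rowPoly_one]
  | succ n =>
    have inner (p : ℕ × ℕ) (hp : p ∈ antidiagonal n) :
        (rowPoly (p.1 + 1) * rowPoly (p.2 + 1)).coeff (n + 1) = 0 := by
      have sum_eq := mem_antidiagonal.mp hp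
      have := natDegree_rowPoly_mul_le (p.1 + 1) (p.2 + 1)
      exact coeff_eq_zero_of_natDegree_lt (by omega)
    rw [rowConv, Nat.sum_antidiagonal_succ, Nat.sum_antidiagonal_succ', coeff_add, coeff_add,
      finsetSum_coeff, sum_eq_zero inner, rowPoly_zero, one_mul, mul_one, coeff_rowPoly,
      K_succ_self]
    norm_num

/-- The part of the recurrence for `rowPoly n` that is linear in the earlier rows: it collects the
terms `K m l` and `-K m l / 2` in the recurrences for `K (2 * m + 1) (2 * l)` and
`K (2 * m + 1) (2 * l + 1)`. -/
noncomputable def rowCorrection (n : ℕ) : ℚ[X] :=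
  if Even n then 0 else (1 - C (1 / 2) * X) * expand ℚ 2 (rowPoly (n / 2))

theorem coeff_rowCorrection (n l : ℕ) :
    (rowCorrection n).coeff l =
      if Even n then 0
      else if Even l then K (n / 2) (l / 2) else -(1 / 2) * K (n / 2) (l / 2) := by
  rw [rowCorrection]
  split_ifs with hn hl <;>
    simp [coeff_one_sub_C_mul_X_mul_expand_two, coeff_rowPoly, *]

theorem natDegree_rowCorrection_le {n : ℕ} (hn : 2 ≤ n) :
    (rowCorrection n).natDegree ≤ n - 2 := by
  refine natDegree_le_iff_coeff_eq_zero.mpr fun l hl => ?_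
  rw [coeff_rowCorrection]
  split_ifs with even_n even_l
  · rfl
  · rw [K_eq_zero_of_le] <;> grind
  · rw [K_eq_zero_of_le, mul_zero] <;> grind

theorem eval_two_rowCorrection (n : ℕ) : (rowCorrection n).eval 2 = 0 := by
  rw [rowCorrection]
  split_ifs <;> simp

theorem K_zero_right_eq_coeff_rowCorrection {n : ℕ} (pos : 0 < n) :
    K n 0 = (rowCorrection n).coeff 0 := by
  rw [coeff_rowCorrection]
  obtain ⟨m, rfl | rfl⟩ := n.even_or_odd'
  · rw [if_pos (even_two_mul m), K_zero_right_of_even (even_two_mul m) pos]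
  · have odd_div : (2 * m + 1) / 2 = m := by omega
    simp [K_two_mul_add_one_zero, odd_div]

theorem K_succ_succ_of_lt {n l : ℕ} (h : l + 1 < n) :
    K (n + 1) (l + 1) = (rowCorrection (n + 1)).coeff (l + 1) + 1 / 2 * (rowConv n).coeff l := by
  rw [K, if_neg (by omega), if_neg (by omega), if_neg (by omega), coeff_rowCorrection,
    coeff_rowConv, sum_attach (range (n + 1)) fun k => ∑ v ∈ range (l + 1),
      K k v * K (n + 1 - 1 - k) (l + 1 - 1 - v)]
  simp only [← Nat.even_iff, dite_eq_ite, Nat.add_sub_cancel]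
  split_ifs <;> ring

theorem rowPoly_succ (n : ℕ) :
    rowPoly (n + 1) = rowCorrection (n + 1) + C (1 / 2) * (X * rowConv n) := by
  obtain _ | n := n
  · simp [rowCorrection, rowConv, rowPoly_zero, rowPoly_one]
  ext l
  rw [coeff_rowPoly, coeff_add, coeff_C_mul]
  obtain _ | l := l
  · rw [K_zero_right_eq_coeff_rowCorrection (by omega), coeff_X_mul_zero, mul_zero, add_zero]
  rw [coeff_X_mul]
  have degree_correction := natDegree_rowCorrection_le (n := n + 1 + 1) (by omega)
  have degree_conv := natDegree_rowConv_le (n + 1)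
  obtain lt | rfl | gt := lt_trichotomy l n
  · exact K_succ_succ_of_lt (by omega)
  · rw [K_succ_self, coeff_rowConv_succ_self, coeff_eq_zero_of_natDegree_lt (by omega)]
    norm_num
  · rw [K_eq_zero_of_le (by omega) (by omega), coeff_eq_zero_of_natDegree_lt (by omega),
      coeff_eq_zero_of_natDegree_lt (by omega), mul_zero, add_zero]

theorem eval_two_rowPoly_succ (n : ℕ) :
    (rowPoly (n + 1)).eval 2 =
      ∑ p ∈ antidiagonal n, (rowPoly p.1).eval 2 * (rowPoly p.2).eval 2 := by
  rw [rowPoly_succ, eval_add, eval_two_rowCorrection, rowConv]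
  simp [eval_finsetSum]

end RowPolynomials

/-- For every natural number `n`, `∑_{k=0}^{n} 2^k · K n k` is the `n`-th Catalan number. -/
theorem sum_two_pow_K_eq_catalan (n : ℕ) :
    ∑ k ∈ Finset.range (n + 1), 2 ^ k * K n k = (catalan n : ℚ) := by
  rw [← eval_rowPoly 2 n]
  refine eq_catalan_of_convolution (a := fun n => (rowPoly n).eval 2) ?_ eval_two_rowPoly_succ n
  rw [rowPoly_zero, Polynomial.eval_one]
end

section
/- For every n ≥ 1, the number of flip-equivalence classes of planar binary trees with exactly n nodes whose class cardinality is 1 (equivalently, in which every pair of sibling subtrees is flip-equivalent) is 1 if n = 2^r − 1 for some integer r ≥ 1, and 0 otherwise. -/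
/-!
A flip class is a singleton exactly when its tree is perfect. Flipping the root fixes a tree only if
its two subtrees coincide, and each subtree inherits the property of being alone in its class, so
the tree is built by repeated doubling from `nil`; conversely no flip changes a perfect tree. Hence
the singleton classes correspond to the heights `r`, and height `r` gives `2 ^ r - 1` nodes.
-/

namespace T

/-- The perfect binary tree of height `r`, in which every root-to-`nil` path passes through `r`
nodes. These are the representatives of the singleton flip classes. -/
def perfect : ℕ → T
  | 0 => nil
  | r + 1 => node (perfect r) (perfect r)

theorem nodes_perfect (r : ℕ) : (perfect r).nodes = mersenne r := by
  induction r with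
  | zero => rfl
  | succ r ih => rw [perfect, nodes, ih, mersenne_succ, two_mul]

theorem perfect_injective : Function.Injective perfect := fun r k h =>
  strictMono_mersenne.injective (by rw [← nodes_perfect, h, nodes_perfect])

end T

namespace Flip

open T

@[refl]
protected theorem refl (t : T) : Flip t t := by
  induction t with
  | nil => exact .nil
  | node _ _ iha ihb => exact .node iha ihb

theorem eq_perfect {s : T} {r : ℕ} (h : Flip s (perfect r)) : s = perfect r := by
  induction r generalizing s with
  | zero => cases h; rfl
  | succ r ih =>
    cases h with
    | node ha hb => rw [ih ha, ih hb, perfect]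
    | swap ha hb => rw [ih ha, ih hb, perfect]

theorem exists_eq_perfect {t : T} (h : ∀ s, Flip s t → s = t) : ∃ r, t = perfect r := by
  induction t with
  | nil => exact ⟨0, rfl⟩
  | node a b iha _ =>
    have rigid_left : ∀ s, Flip s a → s = a := fun s hs =>
      (node.inj (h (.node s b) (.node hs (.refl b)))).1
    have right_eq_left : b = a := (node.inj (h (.node b a) (.swap (.refl b) (.refl a)))).1
    obtain ⟨r, rfl⟩ := iha rigid_left
    exact ⟨r + 1, by rw [right_eq_left, perfect]⟩

theorem setOf_flip_perfect (r : ℕ) : {s : T | Flip s (perfect r)} = {perfect r} :=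
  Set.eq_singleton_iff_unique_mem.2 ⟨.refl _, fun _ => eq_perfect⟩

theorem ncard_setOf_flip_eq_one_iff {t : T} :
    {s : T | Flip s t}.ncard = 1 ↔ ∃ r, t = perfect r := by
  constructor
  · intro h
    obtain ⟨x, hx⟩ := Set.ncard_eq_one.1 h
    have eq_x : ∀ s, Flip s t → s = x := (Set.eq_singleton_iff_unique_mem.1 hx).2
    exact exists_eq_perfect fun s hs => (eq_x s hs).trans (eq_x t (.refl t)).symm
  · rintro ⟨r, rfl⟩
    rw [setOf_flip_perfect, Set.ncard_singleton]

theorem setOf_singleton_class_eq_image (n : ℕ) :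
    {C : Set T | (∃ t : T, t.nodes = n ∧ C = {s : T | Flip s t}) ∧ C.ncard = 1} =
      (singleton ∘ perfect) '' (mersenne ⁻¹' {n}) := by
  ext C
  constructor
  · rintro ⟨⟨t, ht, rfl⟩, hC⟩
    obtain ⟨r, rfl⟩ := ncard_setOf_flip_eq_one_iff.1 hC
    exact ⟨r, (nodes_perfect r).symm.trans ht, (setOf_flip_perfect r).symm⟩
  · rintro ⟨r, hr, rfl⟩
    exact ⟨⟨perfect r, (nodes_perfect r).trans hr, (setOf_flip_perfect r).symm⟩,
      Set.ncard_singleton _⟩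

end Flip

open Classical in
/-- For `n ≥ 1`, the number of flip-equivalence classes of planar binary trees with exactly
`n` nodes and class cardinality `1` is `1` if `n = 2^r − 1` for some `r ≥ 1`, and `0`
otherwise. -/
theorem singleton_classes_count (n : ℕ) (hn : 1 ≤ n) :
    {C : Set T | (∃ t : T, t.nodes = n ∧ C = {s : T | Flip s t}) ∧ C.ncard = 1}.ncard =
      if ∃ r : ℕ, 1 ≤ r ∧ n = 2 ^ r - 1 then 1 else 0 := by
  rw [Flip.setOf_singleton_class_eq_image,
    Set.ncard_image_of_injective _ (Set.singleton_injective.comp T.perfect_injective)]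
  split_ifs with h
  · obtain ⟨r, -, rfl⟩ := h
    have fiber_eq : mersenne ⁻¹' {mersenne r} = {r} := by
      rw [← Set.image_singleton, Set.preimage_image_eq _ strictMono_mersenne.injective]
    exact Set.ncard_eq_one.2 ⟨r, fiber_eq⟩
  · have fiber_eq : mersenne ⁻¹' {n} = ∅ := Set.eq_empty_of_forall_notMem fun r hr =>
      h ⟨r, mersenne_pos.1 (hn.trans_eq hr.symm), hr.symm⟩
    rw [fiber_eq, Set.ncard_empty]
end

section
/- For all natural numbers n and k, B₂(n,k) equals the number of color-preserving flip-equivalence classes of 2-colored planar binary trees with exactly n nodes of which exactly k are black; in particular B₂(n,k) is a natural number. -/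
/-- 2-colored planar binary trees: each node carries a color, black = `true`. -/
inductive T2 : Type where
  | nil : T2
  | node : Bool → T2 → T2 → T2

/-- The number of nodes of a 2-colored planar binary tree. -/
def T2.nodes : T2 → ℕ
  | .nil => 0
  | .node _ a b => a.nodes + b.nodes + 1

/-- The number of black (`true`) nodes of a 2-colored planar binary tree. -/
def T2.blacks : T2 → ℕ
  | .nil => 0
  | .node c a b => a.blacks + b.blacks + (if c then 1 else 0)

/-- Color-preserving flip equivalence: the least relation such that `nil ≈ nil` and,
whenever `a ≈ c` and `b ≈ d`, both `node col a b ≈ node col c d` and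
`node col a b ≈ node col d c` for every color `col`. -/
inductive Flip2 : T2 → T2 → Prop where
  | nil : Flip2 .nil .nil
  | node {a b c d : T2} (col : Bool) :
      Flip2 a c → Flip2 b d → Flip2 (.node col a b) (.node col c d)
  | swap {a b c d : T2} (col : Bool) :
      Flip2 a c → Flip2 b d → Flip2 (.node col a b) (.node col d c)

/-- The sequence `B` with `B 0 = B 1 = 1` and, for `n ≥ 1`,
`B (2n) = (1/2) · ∑_{k=0}^{2n-1} B (2n-1-k) · B k` and
`B (2n+1) = (1/2) · (∑_{k=0}^{2n} B (2n-k) · B k + B n)`. -/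
def B : ℕ → ℚ
  | 0 => 1
  | 1 => 1
  | n + 2 =>
    (1 / 2) * ((∑ k ∈ (Finset.range (n + 2)).attach, B (n + 1 - k.1) * B k.1)
      + if (n + 2) % 2 = 0 then 0 else B ((n + 1) / 2))
termination_by n => n
decreasing_by
  · omega
  · have := Finset.mem_range.mp k.2; omega
  · omega

/-- The array `B2 n k` of 2-colored non-isomorphic binary tree counts: base cases
`B2 0 0 = B2 1 0 = B2 1 1 = 1`, `B2 0 k = 0` for `k > 0`, `B2 1 k = 0` for `k > 1`,
`B2 n 0 = B n` for `n > 1`, `B2 n k = 0` for `k > n`; and for `k > 0` the recurrences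
`B2 (2n) k = (1/2) · ∑_{r=0}^{1} ∑_{ℓ=0}^{2n-1} ∑_{m=0}^{k-r} B2 ℓ m · B2 (2n-1-ℓ) (k-r-m)`,
`B2 (2n+1) (2k) = (1/2) · (∑_{r=0}^{1} ∑_{ℓ=0}^{2n} ∑_{m=0}^{2k-r} B2 ℓ m · B2 (2n-ℓ) (2k-r-m) + B2 n k)`
and similarly
`B2 (2n+1) (2k+1) = (1/2) · (∑_{r=0}^{1} ∑_{ℓ=0}^{2n} ∑_{m=0}^{2k+r} B2 ℓ m · B2 (2n-ℓ) (2k+r-m) + B2 n k)`. -/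
def B2 : ℕ → ℕ → ℚ
  | 0, k => if k = 0 then 1 else 0
  | 1, k => if k ≤ 1 then 1 else 0
  | n + 2, k =>
    if k = 0 then B (n + 2)
    else if n + 2 < k then 0
    else
      (1 / 2) * ((∑ r ∈ Finset.range 2, ∑ l ∈ (Finset.range (n + 2)).attach,
          ∑ m ∈ Finset.range (k - r + 1), B2 l.1 m * B2 (n + 1 - l.1) (k - r - m))
        + if (n + 2) % 2 = 0 then 0 else B2 ((n + 1) / 2) (k / 2))
termination_by n k => n
decreasing_by
  · have := Finset.mem_range.mp l.2; omega
  · omega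
  · omega

/-!
A flip class is either empty or a colored root with an *unordered* pair of flip classes below it.
Unordered pairs are counted by symmetrization: twice their number is the number of ordered pairs
plus the number of diagonal pairs. Ordered pairs of prescribed total size give the convolution in
the recurrence for `B2`, diagonal ones give the extra term that occurs when the number of nodes
below the root is even.
-/

section UnorderedPairs

open Finset

variable {α M N : Type*}

theorem two_nsmul_sum_sym2 [AddCommMonoid M] (s : Finset α) (f : Sym2 α → M) :
    2 • ∑ z ∈ s.sym2, f z = ∑ x ∈ s ×ˢ s, f s(x.1, x.2) + ∑ a ∈ s, f s(a, a) := by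
  induction s using Finset.cons_induction with
  | empty => simp
  | cons a s ha ih =>
    have swap_eq : ∑ x ∈ s, f s(x, a) = ∑ x ∈ s, f s(a, x) :=
      sum_congr rfl fun x _ => by rw [Sym2.eq_swap]
    rw [sum_product] at ih
    rw [sym2_cons, sum_disjUnion, sum_map, sum_product, nsmul_add, ih]
    simp only [sum_cons, sum_add_distrib, Sym2.mkEmbedding_apply, swap_eq]
    abel

instance instHasAntidiagonalProd [AddMonoid M] [AddMonoid N] [HasAntidiagonal M]
    [HasAntidiagonal N] : HasAntidiagonal (M × N) where
  antidiagonal m :=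
    (antidiagonal m.1 ×ˢ antidiagonal m.2).map (Equiv.prodProdProdComm M M N N).toEmbedding
  mem_antidiagonal := by
    rintro ⟨m, n⟩ ⟨⟨a, b⟩, ⟨c, d⟩⟩
    simp [Prod.ext_iff, mem_map_equiv]

theorem sum_antidiagonal_prodMk {R : Type*} [AddMonoid M] [AddMonoid N] [HasAntidiagonal M]
    [HasAntidiagonal N] [AddCommMonoid R] (f : (M × N) × (M × N) → R) (m : M) (n : N) :
    ∑ p ∈ antidiagonal (m, n), f p =
      ∑ i ∈ antidiagonal m, ∑ j ∈ antidiagonal n, f ((i.1, j.1), (i.2, j.2)) := by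
  rw [← sum_product']
  exact sum_map _ _ _

theorem card_filter_product_add_eq [DecidableEq M] [AddMonoid M] [HasAntidiagonal M]
    (s : Finset α) (w : α → M) (m : M) :
    #{x ∈ s ×ˢ s | w x.1 + w x.2 = m} =
      ∑ p ∈ antidiagonal m, #{a ∈ s | w a = p.1} * #{a ∈ s | w a = p.2} := by
  have weights_mem : ∀ x ∈ {x ∈ s ×ˢ s | w x.1 + w x.2 = m}, (w x.1, w x.2) ∈ antidiagonal m :=
    fun x hx => mem_antidiagonal.2 (mem_filter.1 hx).2
  rw [card_eq_sum_card_fiberwise weights_mem]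
  refine sum_congr rfl fun p hp => ?_
  rw [← card_product, ← filter_product, filter_filter]
  congr 1
  refine filter_congr fun x _ => ?_
  rw [← mem_antidiagonal.1 hp, Prod.ext_iff]
  grind

theorem two_mul_card_filter_sym2_add_eq [DecidableEq M] [AddCommMonoid M] [HasAntidiagonal M]
    (s : Finset α) (w : α → M) (m : M) :
    2 * #{z ∈ s.sym2 | (z.map w).add = m} =
      ∑ p ∈ antidiagonal m, #{a ∈ s | w a = p.1} * #{a ∈ s | w a = p.2} +
        #{a ∈ s | w a + w a = m} := by
  rw [← card_filter_product_add_eq]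
  simp only [card_filter]
  exact two_nsmul_sum_sym2 s fun z => if (z.map w).add = m then 1 else 0

end UnorderedPairs

namespace Flip2

protected theorem refl : ∀ t, Flip2 t t
  | .nil => .nil
  | .node c a b => .node c (Flip2.refl a) (Flip2.refl b)

protected theorem symm {s t : T2} (h : Flip2 s t) : Flip2 t s := by
  induction h with
  | nil => exact .nil
  | node c _ _ ihl ihr => exact .node c ihl ihr
  | swap c _ _ ihl ihr => exact .swap c ihr ihl

protected theorem trans {s t u : T2} (hst : Flip2 s t) (htu : Flip2 t u) : Flip2 s u := by
  induction hst generalizing u with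
  | nil => exact htu
  | node c _ _ ihl ihr =>
    cases htu with
    | node _ hl hr => exact .node c (ihl hl) (ihr hr)
    | swap _ hl hr => exact .swap c (ihl hl) (ihr hr)
  | swap c _ _ ihl ihr =>
    cases htu with
    | node _ hl hr => exact .swap c (ihl hr) (ihr hl)
    | swap _ hl hr => exact .node c (ihl hr) (ihr hl)

theorem node_iff {c d : Bool} {a b a' b' : T2} :
    Flip2 (.node c a b) (.node d a' b') ↔
      c = d ∧ (Flip2 a a' ∧ Flip2 b b' ∨ Flip2 a b' ∧ Flip2 b a') := by
  constructor
  · rintro (_ | ⟨_, ha, hb⟩ | ⟨_, ha, hb⟩)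
    · exact ⟨rfl, .inl ⟨ha, hb⟩⟩
    · exact ⟨rfl, .inr ⟨ha, hb⟩⟩
  · rintro ⟨rfl, ⟨ha, hb⟩ | ⟨ha, hb⟩⟩
    · exact .node _ ha hb
    · exact .swap _ ha hb

theorem nodes_eq {s t : T2} (h : Flip2 s t) : s.nodes = t.nodes := by
  induction h with
  | nil => rfl
  | node _ _ _ ihl ihr => simp only [T2.nodes, ihl, ihr]
  | swap _ _ _ ihl ihr => simp only [T2.nodes, ihl, ihr, add_comm]

theorem blacks_eq {s t : T2} (h : Flip2 s t) : s.blacks = t.blacks := by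
  induction h with
  | nil => rfl
  | node _ _ _ ihl ihr => simp only [T2.blacks, ihl, ihr]
  | swap _ _ _ ihl ihr => simp only [T2.blacks, ihl, ihr, add_comm]

/-- Flip equivalence as a setoid on 2-colored planar binary trees. -/
def setoid : Setoid T2 := ⟨Flip2, Flip2.refl, Flip2.symm, Flip2.trans⟩

end Flip2

namespace T2

theorem blacks_le_nodes (t : T2) : t.blacks ≤ t.nodes := by
  induction t with
  | nil => rfl
  | node c a b iha ihb => grind [blacks, nodes]

theorem finite_setOf_nodes_le (n : ℕ) : {t : T2 | t.nodes ≤ n}.Finite := by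
  induction n with
  | zero =>
    refine (Set.finite_singleton nil).subset ?_
    rintro (_ | ⟨c, a, b⟩) h
    · rfl
    · exact absurd h (Nat.not_succ_le_zero _)
  | succ n ih =>
    have node_finite (c : Bool) := Set.Finite.image2 (node c) ih ih
    refine ((Set.finite_singleton nil).union (Set.finite_iUnion node_finite)).subset ?_
    rintro (_ | ⟨c, a, b⟩) h
    · exact .inl rfl
    · have h : a.nodes + b.nodes ≤ n := Nat.le_of_succ_le_succ h
      exact .inr (Set.mem_iUnion.2 ⟨c, Set.mem_image2_of_mem
        (le_of_add_le_left h) (le_of_add_le_right h)⟩)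

end T2

/-- Flip classes: 2-colored binary trees without an order on the two children of a node. -/
def FlipClass : Type := Quotient Flip2.setoid

namespace FlipClass

open Finset

/-- The flip class of a planar tree. -/
def mk (t : T2) : FlipClass := Quotient.mk Flip2.setoid t

theorem mk_eq_mk {s t : T2} : mk s = mk t ↔ Flip2 s t := Quotient.eq (r := Flip2.setoid)

theorem mk_surjective : Function.Surjective mk := Quotient.mk_surjective

/-- The number of nodes and the number of black nodes of a flip class, as a single weight in
`ℕ × ℕ` that is additive over subtrees. -/
def size : FlipClass → ℕ × ℕ :=
  Quotient.lift (fun t => (t.nodes, t.blacks)) fun _ _ h => Prod.ext h.nodes_eq h.blacks_eq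

theorem size_mk (t : T2) : (mk t).size = (t.nodes, t.blacks) := rfl

/-- The flip class with a root of the given color above an unordered pair of flip classes. -/
def node (c : Bool) : Sym2 FlipClass → FlipClass :=
  Sym2.lift ⟨Quotient.map₂ (T2.node c) fun _ _ ha _ _ hb => .node c ha hb, by
    rintro ⟨a⟩ ⟨b⟩
    exact mk_eq_mk.2 (.swap c (.refl a) (.refl b))⟩

theorem node_mk (c : Bool) (a b : T2) : node c s(mk a, mk b) = mk (.node c a b) := rfl

theorem size_node (c : Bool) (z : Sym2 FlipClass) :
    (node c z).size = (z.map size).add + (1, c.toNat) := by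
  induction z with | _ p q
  obtain ⟨a, rfl⟩ := mk_surjective p
  obtain ⟨b, rfl⟩ := mk_surjective q
  cases c <;> rfl

theorem node_inj {c d : Bool} {y z : Sym2 FlipClass} : node c y = node d z ↔ c = d ∧ y = z := by
  induction y with | _ p q
  induction z with | _ p' q'
  obtain ⟨a, rfl⟩ := mk_surjective p
  obtain ⟨b, rfl⟩ := mk_surjective q
  obtain ⟨a', rfl⟩ := mk_surjective p'
  obtain ⟨b', rfl⟩ := mk_surjective q'
  simp only [node_mk, mk_eq_mk, Flip2.node_iff, Sym2.eq_iff]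

theorem node_ne_mk_nil (c : Bool) (z : Sym2 FlipClass) : node c z ≠ mk .nil := fun h => by
  simpa [size_node, size_mk, T2.nodes] using congrArg (Prod.fst ∘ size) h

theorem eq_nil_or_eq_node (q : FlipClass) : q = mk .nil ∨ ∃ c z, q = node c z := by
  obtain ⟨_ | ⟨c, a, b⟩, rfl⟩ := mk_surjective q
  · exact .inl rfl
  · exact .inr ⟨c, s(mk a, mk b), rfl⟩

theorem finite_setOf_size_fst_le (n : ℕ) : {q : FlipClass | q.size.1 ≤ n}.Finite := by
  refine ((T2.finite_setOf_nodes_le n).image mk).subset fun q hq => ?_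
  obtain ⟨t, rfl⟩ := mk_surjective q
  exact ⟨t, hq, rfl⟩

/-- The flip classes with at most `n` nodes: a finite universe in which flip classes and unordered
pairs of bounded size are counted. -/
noncomputable def ofNodesLE (n : ℕ) : Finset FlipClass := (finite_setOf_size_fst_le n).toFinset

theorem mem_ofNodesLE {n : ℕ} {q : FlipClass} : q ∈ ofNodesLE n ↔ q.size.1 ≤ n := by
  simp [ofNodesLE]

/-- The flip classes with `m.1` nodes of which `m.2` are black. -/
noncomputable def ofSize (m : ℕ × ℕ) : Finset FlipClass := {q ∈ ofNodesLE m.1 | q.size = m}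

theorem mem_ofSize {m : ℕ × ℕ} {q : FlipClass} : q ∈ ofSize m ↔ q.size = m := by
  grind [ofSize, mem_ofNodesLE]

theorem filter_ofNodesLE_size_eq {n : ℕ} {m : ℕ × ℕ} (h : m.1 ≤ n) :
    {q ∈ ofNodesLE n | q.size = m} = ofSize m := by
  ext q
  grind [mem_ofSize, mem_ofNodesLE]

/-- The unordered pairs of flip classes with `m.1` nodes in total of which `m.2` are black. -/
noncomputable def pairsOfSize (m : ℕ × ℕ) : Finset (Sym2 FlipClass) :=
  {z ∈ (ofNodesLE m.1).sym2 | (z.map size).add = m}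

theorem mem_pairsOfSize {m : ℕ × ℕ} {z : Sym2 FlipClass} :
    z ∈ pairsOfSize m ↔ (z.map size).add = m := by
  induction z with | _ p q
  simp only [pairsOfSize, mem_filter, mk_mem_sym2_iff, mem_ofNodesLE, Sym2.map_mk, Sym2.add_mk,
    and_iff_right_iff_imp]
  rintro rfl
  exact ⟨Nat.le_add_right _ _, Nat.le_add_left _ _⟩

theorem card_filter_size_add_self (n k : ℕ) :
    #{q ∈ ofNodesLE n | q.size + q.size = (n, k)} =
      if Even n ∧ Even k then #(ofSize (n / 2, k / 2)) else 0 := by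
  split_ifs with h
  · congr 1
    ext q
    simp only [mem_filter, mem_ofNodesLE, mem_ofSize, Prod.ext_iff, Prod.fst_add, Prod.snd_add]
    grind
  · rw [card_eq_zero, filter_eq_empty_iff]
    rintro q - hq
    obtain ⟨hn, hk⟩ := Prod.ext_iff.1 hq
    exact h ⟨⟨_, hn.symm⟩, ⟨_, hk.symm⟩⟩

theorem two_mul_card_pairsOfSize (n k : ℕ) :
    2 * #(pairsOfSize (n, k)) =
      ∑ p ∈ antidiagonal (n, k), #(ofSize p.1) * #(ofSize p.2) +
        if Even n ∧ Even k then #(ofSize (n / 2, k / 2)) else 0 := by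
  rw [pairsOfSize, two_mul_card_filter_sym2_add_eq, card_filter_size_add_self]
  congr 1
  refine sum_congr rfl fun p hp => ?_
  have hp : p.1.1 + p.2.1 = n := congrArg Prod.fst (mem_antidiagonal.1 hp)
  rw [filter_ofNodesLE_size_eq (by lia), filter_ofNodesLE_size_eq (by lia)]

/-- `FlipClass.node` with a fixed root color, as an embedding. -/
def nodeEmbedding (c : Bool) : Sym2 FlipClass ↪ FlipClass :=
  ⟨node c, fun _ _ h => (node_inj.1 h).2⟩

theorem nodeEmbedding_apply (c : Bool) (z : Sym2 FlipClass) : nodeEmbedding c z = node c z := rfl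

theorem mk_nil_mem_ofSize {m : ℕ × ℕ} : mk .nil ∈ ofSize m ↔ m = 0 := by
  rw [mem_ofSize, eq_comm]
  rfl

theorem node_mem_ofSize {c : Bool} {z : Sym2 FlipClass} {n k : ℕ} :
    node c z ∈ ofSize (n + 1, k + c.toNat) ↔ z ∈ pairsOfSize (n, k) := by
  rw [mem_ofSize, mem_pairsOfSize, size_node, ← Prod.mk_add_mk, add_left_inj]

theorem ofSize_zero_zero : ofSize (0, 0) = {mk .nil} := by
  ext q
  obtain rfl | ⟨c, z, rfl⟩ := q.eq_nil_or_eq_node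
  · simp [mk_nil_mem_ofSize]
  · simp [mem_ofSize, size_node, node_ne_mk_nil, Prod.ext_iff]

theorem ofSize_succ_zero (n : ℕ) :
    ofSize (n + 1, 0) = (pairsOfSize (n, 0)).map (nodeEmbedding false) := by
  ext q
  simp only [mem_map, nodeEmbedding_apply]
  obtain rfl | ⟨_ | _, z, rfl⟩ := q.eq_nil_or_eq_node
  · simp [mk_nil_mem_ofSize, node_ne_mk_nil]
  · simpa [node_inj] using node_mem_ofSize (c := false) (k := 0)
  · simp [node_inj, mem_ofSize, size_node, Prod.ext_iff]

theorem disjoint_map_nodeEmbedding (s t : Finset (Sym2 FlipClass)) :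
    Disjoint (s.map (nodeEmbedding false)) (t.map (nodeEmbedding true)) := by
  simp [disjoint_left, nodeEmbedding_apply, node_inj]

theorem ofSize_succ_succ (n k : ℕ) :
    ofSize (n + 1, k + 1) = ((pairsOfSize (n, k + 1)).map (nodeEmbedding false)).disjUnion
      ((pairsOfSize (n, k)).map (nodeEmbedding true)) (disjoint_map_nodeEmbedding _ _) := by
  ext q
  simp only [mem_disjUnion, mem_map, nodeEmbedding_apply]
  obtain rfl | ⟨_ | _, z, rfl⟩ := q.eq_nil_or_eq_node
  · simp [mk_nil_mem_ofSize, node_ne_mk_nil]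
  · simpa [node_inj] using node_mem_ofSize (c := false) (k := k + 1)
  · simpa [node_inj] using node_mem_ofSize (c := true) (k := k)

theorem ofSize_eq_empty_of_lt {n k : ℕ} (h : n < k) : ofSize (n, k) = ∅ := by
  refine eq_empty_of_forall_notMem fun q hq => ?_
  obtain ⟨t, rfl⟩ := mk_surjective q
  have := t.blacks_le_nodes
  grind [mem_ofSize, size_mk]

theorem two_mul_card_ofSize_succ_zero (n : ℕ) :
    2 * #(ofSize (n + 1, 0)) =
      ∑ p ∈ antidiagonal n, #(ofSize (p.1, 0)) * #(ofSize (p.2, 0)) +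
        if Even n then #(ofSize (n / 2, 0)) else 0 := by
  rw [ofSize_succ_zero, card_map, two_mul_card_pairsOfSize, sum_antidiagonal_prodMk]
  simp

theorem two_mul_card_ofSize_succ_succ (n k : ℕ) :
    2 * #(ofSize (n + 1, k + 1)) =
      ∑ p ∈ antidiagonal (n, k + 1), #(ofSize p.1) * #(ofSize p.2) +
        ∑ p ∈ antidiagonal (n, k), #(ofSize p.1) * #(ofSize p.2) +
          if Even n then #(ofSize (n / 2, (k + 1) / 2)) else 0 := by
  rw [ofSize_succ_succ, card_disjUnion, card_map, card_map, mul_add, two_mul_card_pairsOfSize,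
    two_mul_card_pairsOfSize]
  obtain hk | hk := Nat.even_or_odd k
  · have half_eq : (k + 1) / 2 = k / 2 := by grind
    simp [hk, Nat.even_add_one, half_eq, add_assoc]
  · simp [hk, hk.add_one, add_right_comm]

end FlipClass

section Recurrences

open Finset

theorem two_mul_B_succ (n : ℕ) :
    2 * B (n + 1) =
      ∑ p ∈ antidiagonal n, B p.1 * B p.2 + if Even n then B (n / 2) else 0 := by
  match n with
  | 0 => norm_num [B]
  | n + 1 =>
    have parity : (n + 2) % 2 = 0 ↔ ¬Even (n + 1) := by grind
    have sum_eq : ∑ p ∈ antidiagonal (n + 1), B p.1 * B p.2 =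
        ∑ i ∈ range (n + 2), B (n + 1 - i) * B i := by
      simp only [Nat.sum_antidiagonal_eq_sum_range_succ_mk, mul_comm]
    rw [B, sum_eq, sum_attach (range (n + 2)) fun i => B (n + 1 - i) * B i, ← mul_assoc,
      mul_one_div_cancel two_ne_zero, one_mul]
    simp only [parity, ite_not]

theorem B2_zero_right (n : ℕ) : B2 n 0 = B n := by
  match n with
  | 0 | 1 | n + 2 => simp [B2, B]

theorem B2_of_lt {n k : ℕ} (h : n < k) : B2 n k = 0 := by
  match n with
  | 0 | 1 | n + 2 => grind [B2]

theorem sum_antidiagonal_B2 (n k : ℕ) :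
    ∑ p ∈ antidiagonal (n, k), B2 p.1.1 p.1.2 * B2 p.2.1 p.2.2 =
      ∑ l ∈ range (n + 1), ∑ m ∈ range (k + 1), B2 l m * B2 (n - l) (k - m) := by
  simp only [sum_antidiagonal_prodMk, Nat.sum_antidiagonal_eq_sum_range_succ_mk]

theorem two_mul_B2_succ_succ {n k : ℕ} (h : k ≤ n) :
    2 * B2 (n + 1) (k + 1) =
      ∑ p ∈ antidiagonal (n, k + 1), B2 p.1.1 p.1.2 * B2 p.2.1 p.2.2 +
        ∑ p ∈ antidiagonal (n, k), B2 p.1.1 p.1.2 * B2 p.2.1 p.2.2 +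
          if Even n then B2 (n / 2) ((k + 1) / 2) else 0 := by
  rw [sum_antidiagonal_B2, sum_antidiagonal_B2]
  match n with
  | 0 =>
    obtain rfl := Nat.le_zero.1 h
    norm_num [B2, sum_range_succ]
  | n + 1 =>
    have parity : (n + 2) % 2 = 0 ↔ ¬Even (n + 1) := by grind
    rw [B2, if_neg k.succ_ne_zero, if_neg (by lia), ← mul_assoc, mul_one_div_cancel two_ne_zero,
      one_mul, sum_range_succ, sum_range_one,
      sum_attach (range (n + 2)) fun l => ∑ m ∈ range (k + 1 - 0 + 1),
        B2 l m * B2 (n + 1 - l) (k + 1 - 0 - m),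
      sum_attach (range (n + 2)) fun l => ∑ m ∈ range (k + 1 - 1 + 1),
        B2 l m * B2 (n + 1 - l) (k + 1 - 1 - m)]
    simp only [parity, ite_not, Nat.sub_zero, Nat.add_sub_cancel]

end Recurrences

namespace FlipClass

open Finset

theorem card_ofSize_zero_right (n : ℕ) : (#(ofSize (n, 0)) : ℚ) = B n := by
  induction n using Nat.strong_induction_on with | _ n ih
  match n with
  | 0 => simp [ofSize_zero_zero, B]
  | n + 1 =>
    have recurrence := congrArg (Nat.cast (R := ℚ)) (two_mul_card_ofSize_succ_zero n)
    push_cast at recurrence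
    rw [← mul_right_inj' (two_ne_zero' ℚ), recurrence, two_mul_B_succ, ih (n / 2) (by lia)]
    congr 1
    refine sum_congr rfl fun p hp => ?_
    have hp := mem_antidiagonal.1 hp
    rw [ih p.1 (by lia), ih p.2 (by lia)]

theorem card_ofSize_eq_B2 (n k : ℕ) : (#(ofSize (n, k)) : ℚ) = B2 n k := by
  induction n using Nat.strong_induction_on generalizing k with | _ n ih
  obtain hnk | hkn := lt_or_ge n k
  · rw [ofSize_eq_empty_of_lt hnk, card_empty, Nat.cast_zero, B2_of_lt hnk]
  match n, k with
  | n, 0 => rw [card_ofSize_zero_right, B2_zero_right]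
  | n + 1, k + 1 =>
    have sum_eq (j : ℕ) :
        ∑ p ∈ antidiagonal (n, j), (#(ofSize p.1) * #(ofSize p.2) : ℚ) =
          ∑ p ∈ antidiagonal (n, j), B2 p.1.1 p.1.2 * B2 p.2.1 p.2.2 := by
      refine sum_congr rfl fun p hp => ?_
      have hp : p.1.1 + p.2.1 = n := congrArg Prod.fst (mem_antidiagonal.1 hp)
      rw [← ih p.1.1 (by lia), ← ih p.2.1 (by lia)]
    have recurrence := congrArg (Nat.cast (R := ℚ)) (two_mul_card_ofSize_succ_succ n k)
    push_cast at recurrence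
    rw [← mul_right_inj' (two_ne_zero' ℚ), recurrence, two_mul_B2_succ_succ (by lia), sum_eq,
      sum_eq, ih (n / 2) (by lia)]

/-- The set of planar trees in a flip class. -/
def trees (q : FlipClass) : Set T2 := mk ⁻¹' {q}

theorem trees_injective : Function.Injective trees :=
  mk_surjective.preimage_injective.comp Set.singleton_injective

theorem trees_mk (t : T2) : (mk t).trees = {s | Flip2 s t} :=
  Set.ext fun _ => mk_eq_mk

theorem image_trees_ofSize (n k : ℕ) :
    trees '' ofSize (n, k) =
      {C | ∃ t : T2, t.nodes = n ∧ t.blacks = k ∧ C = {s | Flip2 s t}} := by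
  ext C
  simp only [Set.mem_image, mem_coe, mk_surjective.exists, mem_ofSize, size_mk, Prod.mk.injEq,
    trees_mk, and_assoc, eq_comm, Set.mem_ofPred_eq]

end FlipClass

/-- `B2 n k` equals the number of color-preserving flip-equivalence classes of 2-colored
planar binary trees with exactly `n` nodes of which exactly `k` are black; in particular
`B2 n k` is a natural number. -/
theorem B2_counts_classes (n k : ℕ) :
    {C : Set T2 | ∃ t : T2, t.nodes = n ∧ t.blacks = k ∧ C = {s : T2 | Flip2 s t}}.Finite ∧
    ({C : Set T2 | ∃ t : T2, t.nodes = n ∧ t.blacks = k ∧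
        C = {s : T2 | Flip2 s t}}.ncard : ℚ) = B2 n k := by
  rw [← FlipClass.image_trees_ofSize]
  refine ⟨(FlipClass.ofSize (n, k)).finite_toSet.image _, ?_⟩
  rw [Set.ncard_image_of_injective _ FlipClass.trees_injective, Set.ncard_coe_finset,
    FlipClass.card_ofSize_eq_B2]
end
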